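/- Let G be a group and let ρ₁ and ρ₂ be semisimple 3-dimensional complex representations of G, both with trivial determinant. Assume that ρ₁ contains an irreducible 2-dimensional subrepresentation. If ρ₁ ⊕ ρ₁* ⊕ 1 and ρ₂ ⊕ ρ₂* ⊕ 1 are isomorphic as representations of G, then ρ₁ ≅ ρ₂ or ρ₁ ≅ ρ₂*. -/

import Mathlib

open Module

variable {G : Type*} [Group G]

/-- A submodule is invariant under a representation. -/
def IsInvariantSubmodule {V : Type*} [AddCommGroup V] [Module ℂ V]
    (ρ : Representation ℂ G V) (p : Submodule ℂ V) : Prop :=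
  ∀ g : G, ∀ v ∈ p, ρ g v ∈ p

/-- A submodule is an irreducible subrepresentation: it is invariant, nonzero, and contains
no invariant submodules other than `⊥` and itself. -/
def IsIrreducibleSubrep {V : Type*} [AddCommGroup V] [Module ℂ V]
    (ρ : Representation ℂ G V) (p : Submodule ℂ V) : Prop :=
  IsInvariantSubmodule ρ p ∧ p ≠ ⊥ ∧
    ∀ q : Submodule ℂ V, IsInvariantSubmodule ρ q → q ≤ p → q = ⊥ ∨ q = p

/-- A representation is irreducible: the space is nonzero and has no invariant subspaces
other than `0` and the whole space. -/
def IsIrreducibleRep {V : Type*} [AddCommGroup V] [Module ℂ V]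
    (ρ : Representation ℂ G V) : Prop :=
  Nontrivial V ∧ ∀ p : Submodule ℂ V, IsInvariantSubmodule ρ p → p = ⊥ ∨ p = ⊤

/-- A representation is semisimple: the space is an (internal) direct sum of irreducible
subrepresentations. -/
def IsSemisimpleRep {V : Type*} [AddCommGroup V] [Module ℂ V]
    (ρ : Representation ℂ G V) : Prop :=
  ∃ (ι : Type) (s : ι → Submodule ℂ V),
    (∀ i, IsIrreducibleSubrep ρ (s i)) ∧ iSupIndep s ∧ iSup s = ⊤

/-- Two representations are isomorphic: there is a `G`-equivariant linear isomorphism. -/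
def RepIso {V W : Type*} [AddCommGroup V] [Module ℂ V] [AddCommGroup W] [Module ℂ W]
    (ρ : Representation ℂ G V) (σ : Representation ℂ G W) : Prop :=
  ∃ e : V ≃ₗ[ℂ] W, ∀ (g : G) (v : V), e (ρ g v) = σ g (e v)

/-- The seven-dimensional representation `ρ ⊕ ρ* ⊕ 1` on `V × V* × ℂ`, where `ρ*` is the
dual (contragredient) representation and `1` is the one-dimensional trivial representation. -/
noncomputable def repSum7 {V : Type*} [AddCommGroup V] [Module ℂ V]
    (ρ : Representation ℂ G V) : Representation ℂ G (V × Module.Dual ℂ V × ℂ) where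
  toFun g := (ρ g).prodMap (((ρ.dual) g).prodMap LinearMap.id)
  map_one' := by
    refine LinearMap.ext fun x => ?_
    simp [LinearMap.prodMap_apply, Module.Dual.transpose_apply, Module.End.one_eq_id]
  map_mul' g h := by
    refine LinearMap.ext fun x => ?_
    simp [LinearMap.prodMap_apply, Module.End.mul_apply, Module.Dual.transpose_apply,
      Module.End.mul_eq_comp, LinearMap.comp_assoc]

/-!
The argument is a Krull–Schmidt exchange. An irreducible subrepresentation `p` of codimension one
in `ρ₁` is either complemented, or else `ρ₁` is indecomposable. So one of `p`, `ρ₁` is an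
indecomposable direct summand of `ρ₁`, hence of `ρ₂ ⊕ ρ₂* ⊕ 1`. By Fitting's lemma its endomorphism
ring is local, so it is already a direct summand of one of the three terms, and of `ρ₂` or `ρ₂*`
since its dimension exceeds one. If the summand is `ρ₁`, compare dimensions. If it is `p`, then
both `ρ₁` and `ρ₂` (or `ρ₂*`) are the sum of `p` and a line, and equality of determinants forces
the two lines to be isomorphic.
-/

open Representation

/-- A bounded lattice is indecomposable if it is nontrivial and `⊥`, `⊤` are its only complementary
pair. As with `IsSimpleOrder` and irreducibility, a representation is indecomposable when its
lattice of subrepresentations is. -/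
class IsIndecomposableOrder (α : Type*) [Lattice α] [BoundedOrder α] : Prop
    extends Nontrivial α where
  eq_bot_or_eq_bot {a b : α} (h : IsCompl a b) : a = ⊥ ∨ b = ⊥

section Order

variable {α : Type*} [Lattice α] [BoundedOrder α]

theorem isIndecomposableOrder_of_isSimpleOrder [IsSimpleOrder α] : IsIndecomposableOrder α where
  eq_bot_or_eq_bot {a _} h :=
    (eq_bot_or_eq_top a).imp_right fun ha => eq_bot_of_isCompl_top (ha ▸ h).symm

theorem isComplemented_or_isIndecomposableOrder {p : α} (hatom : IsAtom p)
    (hcoatom : IsCoatom p) : IsComplemented p ∨ IsIndecomposableOrder α := by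
  refine or_iff_not_imp_left.2 fun hp =>
    { toNontrivial := ⟨p, ⊤, hcoatom.1⟩, eq_bot_or_eq_bot := fun {a b} hab => ?_ }
  by_cases hpa : p ≤ a
  · rcases hpa.eq_or_lt with rfl | hlt
    · exact (hp ⟨b, hab⟩).elim
    · exact Or.inr (eq_bot_of_isCompl_top (hcoatom.2 a hlt ▸ hab).symm)
  · have hdisj : Disjoint p a := hatom.not_le_iff_disjoint.1 hpa
    have hap : a ≤ p := by
      by_contra hap
      exact hp ⟨a, hdisj, hcoatom.not_le_iff_codisjoint.1 hap⟩
    exact Or.inl (hdisj.symm.eq_bot_of_le hap)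

end Order

theorem isLocalRing_of_isNilpotent_or_isUnit {R : Type*} [Ring R] [Nontrivial R]
    (h : ∀ a : R, IsNilpotent a ∨ IsUnit a) : IsLocalRing R where
  isUnit_or_isUnit_of_add_one {a _} hab :=
    (h a).symm.imp_right fun ha => eq_sub_of_add_eq' hab ▸ ha.isUnit_one_sub

section Monoid

variable {k H V W U : Type*} [CommRing k] [Monoid H]
  [AddCommGroup V] [Module k V] [AddCommGroup W] [Module k W] [AddCommGroup U] [Module k U]
  {ρ : Representation k H V} {σ : Representation k H W} {τ : Representation k H U}

theorem isCompl_toSubmodule_iff {p q : Subrepresentation ρ} :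
    IsCompl p.toSubmodule q.toSubmodule ↔ IsCompl p q := by
  simp only [isCompl_iff, disjoint_iff, codisjoint_iff,
    ← Subrepresentation.toSubmodule_injective.eq_iff, Subrepresentation.toSubmodule_inf,
    Subrepresentation.toSubmodule_sup]
  rfl

theorem isSimpleOrder_subrepresentation_of_isAtom {p : Subrepresentation ρ} (hp : IsAtom p) :
    IsSimpleOrder (Subrepresentation p.toRepresentation) where
  exists_pair_ne := ⟨⊥, ⊤, fun h => hp.1 <| Subrepresentation.ext <|
    Submodule.subsingleton_iff_eq_bot.1 <| (Submodule.subsingleton_iff k).1 <|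
      subsingleton_of_bot_eq_top (congrArg Subrepresentation.toSubmodule h)⟩
  eq_bot_or_eq_top q := by
    let q' : Subrepresentation ρ :=
      { toSubmodule := q.toSubmodule.map p.toSubmodule.subtype
        apply_mem_toSubmodule := by
          rintro g _ ⟨v, hv, rfl⟩
          exact ⟨p.toRepresentation g v, q.apply_mem_toSubmodule g hv, rfl⟩ }
    have hinj := Submodule.map_injective_of_injective p.toSubmodule.injective_subtype
    have hle : q' ≤ p := by
      rintro _ ⟨v, -, rfl⟩
      exact v.2
    refine (hp.le_iff.1 hle).imp (fun h => ?_) fun h => ?_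
    · exact Subrepresentation.ext <| hinj <|
        (congrArg Subrepresentation.toSubmodule h).trans (Submodule.map_bot _).symm
    · exact Subrepresentation.ext <| hinj <|
        (congrArg Subrepresentation.toSubmodule h).trans (Submodule.map_subtype_top _).symm

theorem intertwiningMap_toLinearMap_pow (f : IntertwiningMap ρ ρ) (n : ℕ) :
    (f ^ n).toLinearMap = f.toLinearMap ^ n := by
  induction n with
  | zero => rfl
  | succ n ih => rw [pow_succ, pow_succ, ← ih]; rfl

theorem isUnit_intertwiningMap_of_bijective {f : IntertwiningMap ρ ρ}
    (hf : Function.Bijective f) : IsUnit f := by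
  refine ⟨⟨f, (f.ofBijective hf).symm.toIntertwiningMap, ?_, ?_⟩, rfl⟩
  · ext v; exact (f.ofBijective hf).apply_symm_apply v
  · ext v; exact (f.ofBijective hf).symm_apply_apply v

theorem isNilpotent_or_isUnit_intertwiningMap [IsNoetherian k V] [IsArtinian k V]
    [IsIndecomposableOrder (Subrepresentation ρ)] (f : IntertwiningMap ρ ρ) :
    IsNilpotent f ∨ IsUnit f := by
  obtain ⟨n, hn, hn0⟩ := (f.toLinearMap.eventually_isCompl_ker_pow_range_pow.and
    (Filter.eventually_ne_atTop 0)).exists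
  have hcompl : IsCompl (f ^ n).ker (f ^ n).range := by
    rw [← isCompl_toSubmodule_iff]
    simpa only [IntertwiningMap.ker_toSubmodule, IntertwiningMap.range_toSubmodule,
      intertwiningMap_toLinearMap_pow] using hn
  rcases IsIndecomposableOrder.eq_bot_or_eq_bot hcompl with hker | hrange
  · have hinj : Function.Injective (f ^ n).toLinearMap :=
      LinearMap.ker_eq_bot.1 (congrArg Subrepresentation.toSubmodule hker)
    have hsurj : Function.Surjective (f ^ n).toLinearMap :=
      LinearMap.range_eq_top.1 <| congrArg Subrepresentation.toSubmodule <|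
        eq_top_of_bot_isCompl (hker ▸ hcompl)
    exact Or.inr ((isUnit_pow_iff hn0).1 (isUnit_intertwiningMap_of_bijective ⟨hinj, hsurj⟩))
  · exact Or.inl ⟨n, IntertwiningMap.ext <|
      LinearMap.range_eq_bot.1 (congrArg Subrepresentation.toSubmodule hrange)⟩

theorem isLocalRing_intertwiningMap [IsNoetherian k V] [IsArtinian k V]
    [IsIndecomposableOrder (Subrepresentation ρ)] : IsLocalRing (IntertwiningMap ρ ρ) := by
  let : Ring (IntertwiningMap ρ ρ) := Algebra.semiringToRing k
  have : Nontrivial (IntertwiningMap ρ ρ) := by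
    refine ⟨0, 1, fun h => bot_ne_top (α := Subrepresentation ρ) ?_⟩
    refine (eq_bot_iff.2 fun v _ => ?_).symm
    exact congrArg (fun f : IntertwiningMap ρ ρ => f v) h.symm
  exact isLocalRing_of_isNilpotent_or_isUnit isNilpotent_or_isUnit_intertwiningMap

theorem det_eq_of_equiv (e : ρ.Equiv σ) (g : H) :
    LinearMap.det (ρ g) = LinearMap.det (σ g) := by
  rw [← e.conj_apply_self, LinearEquiv.conj_apply, LinearMap.comp_assoc, LinearMap.det_conj]

theorem nonempty_prod_equiv_of_isCompl {p q : Subrepresentation ρ} (h : IsCompl p q) :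
    Nonempty ((p.toRepresentation.prod q.toRepresentation).Equiv ρ) :=
  ⟨.mk (Submodule.prodEquivOfIsCompl _ _ (isCompl_toSubmodule_iff.2 h)) fun g =>
    LinearMap.ext fun _ => (map_add (ρ g) _ _).symm⟩

theorem injective_of_comp_eq_id {i : IntertwiningMap σ ρ} {r : IntertwiningMap ρ σ}
    (h : r.comp i = .id σ) : Function.Injective i :=
  Function.LeftInverse.injective fun v => DFunLike.congr_fun h v

/-- The representation `σ` is isomorphic to a direct summand of `ρ`. This is encoded as a
retraction: the summand is the image of a morphism `σ → ρ` with a left inverse. -/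
def IsDirectSummandRep (σ : Representation k H W) (ρ : Representation k H V) : Prop :=
  ∃ (i : IntertwiningMap σ ρ) (r : IntertwiningMap ρ σ), r.comp i = .id σ

namespace IsDirectSummandRep

theorem of_equiv (e : σ.Equiv ρ) : IsDirectSummandRep σ ρ :=
  ⟨e.toIntertwiningMap, e.symm.toIntertwiningMap, by ext v; exact e.symm_apply_apply v⟩

theorem prod_left : IsDirectSummandRep ρ (ρ.prod σ) :=
  ⟨.inl k ρ σ, .fst k ρ σ, IntertwiningMap.fst_comp_inl⟩

theorem trans (hτσ : IsDirectSummandRep τ σ) (hσρ : IsDirectSummandRep σ ρ) :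
    IsDirectSummandRep τ ρ := by
  obtain ⟨i, r, hri⟩ := hτσ
  obtain ⟨j, s, hsj⟩ := hσρ
  refine ⟨j.comp i, r.comp s, ?_⟩
  ext v
  exact (congrArg r (DFunLike.congr_fun hsj (i v))).trans (DFunLike.congr_fun hri v)

theorem of_isUnit_comp {i : IntertwiningMap σ ρ} {r : IntertwiningMap ρ σ}
    (h : IsUnit (r.comp i : IntertwiningMap σ σ)) : IsDirectSummandRep σ ρ := by
  obtain ⟨u, hu⟩ := h
  refine ⟨i, (↑u⁻¹ : IntertwiningMap σ σ).comp r, ?_⟩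
  calc ((↑u⁻¹ : IntertwiningMap σ σ).comp r).comp i = ↑u⁻¹ * r.comp i := rfl
    _ = 1 := by rw [← hu, u.inv_mul]

theorem of_prod [IsLocalRing (IntertwiningMap σ σ)] (h : IsDirectSummandRep σ (ρ.prod τ)) :
    IsDirectSummandRep σ ρ ∨ IsDirectSummandRep σ τ := by
  obtain ⟨i, r, hri⟩ := h
  have hsum : ((r.comp (.inl k ρ τ)).comp ((IntertwiningMap.fst k ρ τ).comp i) :
      IntertwiningMap σ σ) +
      (r.comp (.inr k ρ τ)).comp ((IntertwiningMap.snd k ρ τ).comp i) = 1 := by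
    calc _ = r.comp (((IntertwiningMap.inl k ρ τ).comp (.fst k ρ τ) +
          (IntertwiningMap.inr k ρ τ).comp (.snd k ρ τ)).comp i) := by
          rw [IntertwiningMap.comp_add, IntertwiningMap.add_comp]; rfl
      _ = r.comp i := by rw [IntertwiningMap.coprod_inl_inr]; rfl
      _ = 1 := hri
  exact (IsLocalRing.isUnit_or_isUnit_of_add_one hsum).imp of_isUnit_comp of_isUnit_comp

theorem finrank_le [Module.Finite k V] [StrongRankCondition k] (h : IsDirectSummandRep σ ρ) :
    finrank k W ≤ finrank k V := by
  obtain ⟨i, r, hri⟩ := h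
  exact LinearMap.finrank_le_finrank_of_injective (f := i.toLinearMap) (injective_of_comp_eq_id hri)

theorem exists_complement (h : IsDirectSummandRep σ ρ) :
    ∃ q : Subrepresentation ρ, Nonempty ((σ.prod q.toRepresentation).Equiv ρ) := by
  obtain ⟨i, r, hri⟩ := h
  have hr : ∀ w, r (i w) = w := DFunLike.congr_fun hri
  let f : IntertwiningMap (σ.prod r.ker.toRepresentation) ρ :=
    ⟨i.toLinearMap.coprod r.ker.toSubmodule.subtype, fun g => LinearMap.ext fun x =>
      (congrArg (· + ρ g x.2) (i.isIntertwining _ _ g x.1)).trans (map_add (ρ g) _ _).symm⟩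
  refine ⟨r.ker, ⟨f.ofBijective ⟨?_, fun v => ?_⟩⟩⟩
  · refine (injective_iff_map_eq_zero f).2 fun ⟨w, x, hx⟩ hwx => ?_
    have hw : w = 0 := by
      simpa [f, hr, show r x = 0 from hx] using congrArg r hwx
    subst hw
    simpa [f] using hwx
  · have hker : v - i (r v) ∈ r.ker.toSubmodule := by
      simp [IntertwiningMap.ker_toSubmodule, hr]
    exact ⟨(r v, ⟨v - i (r v), hker⟩), add_sub_cancel _ _⟩

end IsDirectSummandRep

end Monoid

section Field

variable {k H V W U X : Type*} [Field k] [Monoid H]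
  [AddCommGroup V] [Module k V] [AddCommGroup W] [Module k W] [AddCommGroup U] [Module k U]
  [AddCommGroup X] [Module k X]
  {ρ : Representation k H V} {σ : Representation k H W} {τ : Representation k H U}
  {χ : Representation k H X}

theorem isCoatom_of_finrank_add_one [FiniteDimensional k V] {p : Subrepresentation ρ}
    (hp : finrank k p.toSubmodule + 1 = finrank k V) : IsCoatom p := by
  refine ⟨fun h => ?_, fun q hpq => Subrepresentation.ext <| Submodule.eq_top_of_finrank_eq ?_⟩
  · have htop : p.toSubmodule = ⊤ := congrArg Subrepresentation.toSubmodule h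
    rw [htop, finrank_top] at hp
    omega
  · have hlt := Submodule.finrank_lt_finrank_of_lt (show p.toSubmodule < q.toSubmodule from hpq)
    have hle := q.toSubmodule.finrank_le
    omega

theorem nonempty_equiv_of_finrank_eq_one_of_det_eq (hV : finrank k V = 1) (hW : finrank k W = 1)
    (hdet : ∀ g, LinearMap.det (ρ g) = LinearMap.det (σ g)) : Nonempty (ρ.Equiv σ) := by
  have : FiniteDimensional k V := .of_finrank_pos (by omega)
  have : FiniteDimensional k W := .of_finrank_pos (by omega)
  refine ⟨.mk (LinearEquiv.ofFinrankEq V W (hV.trans hW.symm)) fun g => ?_⟩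
  obtain ⟨a, ha : ρ g = _, -⟩ := LinearMap.existsUnique_eq_smul_id_of_finrank_eq_one hV (ρ g)
  obtain ⟨b, hb : σ g = _, -⟩ := LinearMap.existsUnique_eq_smul_id_of_finrank_eq_one hW (σ g)
  have hab : a = b := by simpa [ha, hb, hV, hW] using hdet g
  ext v
  simp [ha, hb, hab]

namespace IsDirectSummandRep

theorem nonempty_equiv_of_finrank_eq [FiniteDimensional k V] [FiniteDimensional k W]
    (h : IsDirectSummandRep σ ρ) (hdim : finrank k W = finrank k V) :
    Nonempty (σ.Equiv ρ) := by
  obtain ⟨i, r, hri⟩ := h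
  have hinj := injective_of_comp_eq_id hri
  exact ⟨i.ofBijective ⟨hinj,
    (LinearMap.injective_iff_surjective_of_finrank_eq_finrank (f := i.toLinearMap) hdim).1 hinj⟩⟩

theorem of_prod_prod_of_finrank_lt [FiniteDimensional k W] [FiniteDimensional k X]
    [IsIndecomposableOrder (Subrepresentation σ)] (hχ : finrank k X < finrank k W)
    (h : IsDirectSummandRep σ (ρ.prod (τ.prod χ))) :
    IsDirectSummandRep σ ρ ∨ IsDirectSummandRep σ τ := by
  have : IsLocalRing (IntertwiningMap σ σ) := isLocalRing_intertwiningMap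
  exact h.of_prod.imp_right fun hστχ =>
    hστχ.of_prod.resolve_right fun hσχ => hχ.not_ge hσχ.finrank_le

end IsDirectSummandRep
end Field

section Group

theorem det_dual {k Γ V : Type*} [CommRing k] [Group Γ] [AddCommGroup V] [Module k V]
    [Module.Free k V] [Module.Finite k V] (ρ : Representation k Γ V) (g : Γ) :
    LinearMap.det (ρ.dual g) = LinearMap.det (ρ g⁻¹) :=
  LinearMap.det_dualMap _

variable {k Γ V W U X : Type*} [Field k] [Group Γ]
  [AddCommGroup V] [Module k V] [AddCommGroup W] [Module k W] [AddCommGroup U] [Module k U]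
  [AddCommGroup X] [Module k X]
  [FiniteDimensional k V] [FiniteDimensional k W] [FiniteDimensional k U] [FiniteDimensional k X]
  {ρ : Representation k Γ V} {σ : Representation k Γ W} {τ : Representation k Γ U}
  {χ : Representation k Γ X}

theorem IsDirectSummandRep.nonempty_equiv_of_det_eq (hρ : IsDirectSummandRep τ ρ)
    (hσ : IsDirectSummandRep τ σ) (hV : finrank k U + 1 = finrank k V)
    (hdim : finrank k V = finrank k W)
    (hdet : ∀ g, LinearMap.det (ρ g) = LinearMap.det (σ g)) : Nonempty (ρ.Equiv σ) := by
  obtain ⟨p, ⟨e⟩⟩ := hρ.exists_complement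
  obtain ⟨q, ⟨f⟩⟩ := hσ.exists_complement
  have hp : finrank k p.toSubmodule = 1 := by
    have := e.toLinearEquiv.finrank_eq
    rw [finrank_prod] at this
    omega
  have hq : finrank k q.toSubmodule = 1 := by
    have := f.toLinearEquiv.finrank_eq
    rw [finrank_prod] at this
    omega
  obtain ⟨l⟩ : Nonempty (p.toRepresentation.Equiv q.toRepresentation) := by
    refine nonempty_equiv_of_finrank_eq_one_of_det_eq hp hq fun g => ?_
    have hτ : LinearMap.det (τ g) ≠ 0 := (((Group.isUnit g).map τ).map LinearMap.det).ne_zero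
    refine mul_left_cancel₀ hτ ?_
    calc LinearMap.det (τ g) * LinearMap.det (p.toRepresentation g)
        = LinearMap.det (ρ g) := by rw [← LinearMap.det_prodMap]; exact det_eq_of_equiv e g
      _ = LinearMap.det (σ g) := hdet g
      _ = LinearMap.det (τ g) * LinearMap.det (q.toRepresentation g) := by
        rw [← LinearMap.det_prodMap]; exact (det_eq_of_equiv f g).symm
  let l' : (τ.prod p.toRepresentation).Equiv (τ.prod q.toRepresentation) :=
    .mk ((LinearEquiv.refl k U).prodCongr l.toLinearEquiv) fun g => LinearMap.ext fun x =>
      Prod.ext rfl (l.isIntertwining _ _ g x.2)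
  exact ⟨(e.symm.trans l').trans f⟩

theorem nonempty_equiv_or_of_isDirectSummandRep_prod {p : Subrepresentation ρ} (hp : IsAtom p)
    (hcodim : finrank k p.toSubmodule + 1 = finrank k V)
    (hχ : finrank k X < finrank k p.toSubmodule)
    (hσ : finrank k V = finrank k W) (hτ : finrank k V = finrank k U)
    (hdetσ : ∀ g, LinearMap.det (ρ g) = LinearMap.det (σ g))
    (hdetτ : ∀ g, LinearMap.det (ρ g) = LinearMap.det (τ g))
    (h : IsDirectSummandRep ρ (σ.prod (τ.prod χ))) :
    Nonempty (ρ.Equiv σ) ∨ Nonempty (ρ.Equiv τ) := by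
  rcases isComplemented_or_isIndecomposableOrder hp (isCoatom_of_finrank_add_one hcodim) with
    ⟨q, hpq⟩ | hρ
  · have := isSimpleOrder_subrepresentation_of_isAtom hp
    have : IsIndecomposableOrder (Subrepresentation p.toRepresentation) :=
      isIndecomposableOrder_of_isSimpleOrder
    obtain ⟨e⟩ := nonempty_prod_equiv_of_isCompl hpq
    have hpρ : IsDirectSummandRep p.toRepresentation ρ := .trans .prod_left (.of_equiv e)
    exact ((hpρ.trans h).of_prod_prod_of_finrank_lt hχ).imp
      (fun hpσ => hpρ.nonempty_equiv_of_det_eq hpσ hcodim hσ hdetσ)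
      fun hpτ => hpρ.nonempty_equiv_of_det_eq hpτ hcodim hτ hdetτ
  · exact (h.of_prod_prod_of_finrank_lt (by omega)).imp
      (fun hρσ => hρσ.nonempty_equiv_of_finrank_eq hσ)
      fun hρτ => hρτ.nonempty_equiv_of_finrank_eq hτ

end Group

section Complex

variable {V W : Type*} [AddCommGroup V] [Module ℂ V] [AddCommGroup W] [Module ℂ W]
  {ρ : Representation ℂ G V} {σ : Representation ℂ G W}

theorem repIso_iff_nonempty_equiv : RepIso ρ σ ↔ Nonempty (ρ.Equiv σ) :=
  ⟨fun ⟨e, he⟩ => ⟨.mk e fun g => LinearMap.ext (he g)⟩,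
    fun ⟨e⟩ => ⟨e.toLinearEquiv, e.isIntertwining _ _⟩⟩

theorem isAtom_of_isIrreducibleSubrep {p : Subrepresentation ρ}
    (hp : IsIrreducibleSubrep ρ p.toSubmodule) : IsAtom p := by
  refine ⟨fun h => hp.2.1 (congrArg Subrepresentation.toSubmodule h), fun q hq => ?_⟩
  refine Subrepresentation.ext <|
    (hp.2.2 q.toSubmodule q.apply_mem_toSubmodule hq.le).resolve_right fun h => ?_
  exact hq.ne (Subrepresentation.ext h)

theorem repSum7_eq_prod (ρ : Representation ℂ G V) :
    repSum7 ρ = ρ.prod (ρ.dual.prod (trivial ℂ G ℂ)) :=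
  rfl

theorem isDirectSummandRep_of_repSum7_iso (h : RepIso (repSum7 ρ) (repSum7 σ)) :
    IsDirectSummandRep ρ (σ.prod (σ.dual.prod (trivial ℂ G ℂ))) := by
  rw [repSum7_eq_prod, repSum7_eq_prod] at h
  obtain ⟨e⟩ := repIso_iff_nonempty_equiv.1 h
  exact .trans .prod_left (.of_equiv e)

end Complex

theorem repIso_or_repIso_dual_of_repSum7_iso_of_twoDimSummand_general
    {V₁ V₂ : Type*} [AddCommGroup V₁] [Module ℂ V₁] [AddCommGroup V₂] [Module ℂ V₂]
    [FiniteDimensional ℂ V₁] [FiniteDimensional ℂ V₂]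
    {ρ₁ : Representation ℂ G V₁} {ρ₂ : Representation ℂ G V₂}
    (hdim : finrank ℂ V₁ = finrank ℂ V₂)
    (hdet₁ : ∀ g : G, LinearMap.det (ρ₁ g) = 1) (hdet₂ : ∀ g : G, LinearMap.det (ρ₂ g) = 1)
    {p : Submodule ℂ V₁} (hp : IsIrreducibleSubrep ρ₁ p) (hp_lt : 1 < finrank ℂ p)
    (hcodim : finrank ℂ p + 1 = finrank ℂ V₁)
    (hiso : RepIso (repSum7 ρ₁) (repSum7 ρ₂)) :
    RepIso ρ₁ ρ₂ ∨ RepIso ρ₁ ρ₂.dual := by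
  simp only [repIso_iff_nonempty_equiv]
  let P : Subrepresentation ρ₁ := ⟨p, hp.1⟩
  exact nonempty_equiv_or_of_isDirectSummandRep_prod (isAtom_of_isIrreducibleSubrep (p := P) hp)
    hcodim (by rwa [finrank_self]) hdim (by rw [hdim, Subspace.dual_finrank_eq])
    (fun g => by rw [hdet₁, hdet₂]) (fun g => by rw [det_dual, hdet₁, hdet₂])
    (isDirectSummandRep_of_repSum7_iso hiso)

/-- **The case of an irreducible two-dimensional summand in the proof of Lemma 2.2(i).**
If `ρ₁` and `ρ₂` are semisimple `3`-dimensional complex representations of a group `G`, both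
with trivial determinant, `ρ₁` contains an irreducible `2`-dimensional subrepresentation, and
`ρ₁ ⊕ ρ₁* ⊕ 1` is isomorphic to `ρ₂ ⊕ ρ₂* ⊕ 1`, then `ρ₁ ≅ ρ₂` or `ρ₁ ≅ ρ₂*`. -/
theorem repIso_or_repIso_dual_of_repSum7_iso_of_twoDimSummand {G : Type*} [Group G]
    {V₁ V₂ : Type*} [AddCommGroup V₁] [Module ℂ V₁] [AddCommGroup V₂] [Module ℂ V₂]
    [FiniteDimensional ℂ V₁] [FiniteDimensional ℂ V₂]
    (hdim₁ : Module.finrank ℂ V₁ = 3) (hdim₂ : Module.finrank ℂ V₂ = 3)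
    (ρ₁ : Representation ℂ G V₁) (ρ₂ : Representation ℂ G V₂)
    (hss₁ : IsSemisimpleRep ρ₁) (hss₂ : IsSemisimpleRep ρ₂)
    (hdet₁ : ∀ g : G, LinearMap.det (ρ₁ g) = 1)
    (hdet₂ : ∀ g : G, LinearMap.det (ρ₂ g) = 1)
    (h2dim : ∃ p : Submodule ℂ V₁, IsIrreducibleSubrep ρ₁ p ∧ Module.finrank ℂ p = 2)
    (hiso : RepIso (repSum7 ρ₁) (repSum7 ρ₂)) :
    RepIso ρ₁ ρ₂ ∨ RepIso ρ₁ ρ₂.dual := by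
  obtain ⟨p, hp, hp2⟩ := h2dim
  exact repIso_or_repIso_dual_of_repSum7_iso_of_twoDimSummand_general (hdim₁.trans hdim₂.symm)
    hdet₁ hdet₂ hp (by omega) (by omega) hiso
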